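/- Let (X,d,μ) be a coarse median space and n ∈ ℕ. Then the following are equivalent: (Multi-median condition) there exists a non-decreasing function ψ such that for every λ > 0 and all x₁,…,x_{n+1}, q ∈ X, ⋂_{i≠j} N_λ([x_i,x_j]) ⊆ ⋃_{i=1}^{n+1} N_{ψ(λ)}([x_i,q]); (Thin (n+1)-cubes condition) there exists a non-decreasing function φ such that for all x₁,…,x_{n+1}, p, q ∈ X, min{d(p, μ(x_i,p,q)) : i = 1,…,n+1} ≤ φ(max{d(p, μ(x_i,x_j,p)) : i ≠ j}). -/

import Mathlib

/-- The interval `[a,b]` associated to a ternary operator `μ`. -/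
def cmInterval {X : Type*} (μ : X → X → X → X) (a b : X) : Set X :=
  {c | ∃ x, c = μ a x b}

/-- The closed `R`-neighbourhood of a set `A`. -/
def cmNbhd {X : Type*} [MetricSpace X] (R : ℝ) (A : Set X) : Set X :=
  {x | ∃ a ∈ A, dist x a ≤ R}

/-- A coarse median space: a metric space with a ternary operator satisfying
(M1), (M2), (C1) and (C2). -/
structure IsCoarseMedianSpace {X : Type*} [MetricSpace X] (μ : X → X → X → X)
    (ρ : ℝ → ℝ) (κ₄ : ℝ) : Prop where
  M1 : ∀ a b : X, μ a a b = a
  M2₁ : ∀ a b c : X, μ a b c = μ a c b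
  M2₂ : ∀ a b c : X, μ a b c = μ b a c
  ρ_mono : Monotone ρ
  C1 : ∀ a a' b b' c c' : X,
    dist (μ a b c) (μ a' b' c') ≤ ρ (dist a a' + dist b b' + dist c c')
  C2 : ∀ a b c d : X, dist (μ (μ a b c) b d) (μ a b (μ c b d)) ≤ κ₄

/-- A point close to an interval is close to its own projection to that interval. -/
theorem cm_near {X : Type*} [MetricSpace X] (μ : X → X → X → X)
    (ρ : ℝ → ℝ) (κ₄ : ℝ) (h : IsCoarseMedianSpace μ ρ κ₄) (a b p : X) (r : ℝ)
    (hp : p ∈ cmNbhd r (cmInterval μ a b)) :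
    dist p (μ a p b) ≤ r + κ₄ + ρ r := by
  obtain ⟨c, ⟨y, rfl⟩, hy⟩ := hp
  have e1 : dist (μ a y b) (μ a (μ a y b) b) ≤ κ₄ := by
    have h2 := h.C2 b a b y
    have e2 : μ b a b = b := by rw [h.M2₁, h.M1]
    have e3 : μ b a y = μ a y b := by rw [h.M2₂, h.M2₁]
    have e4 : μ b a (μ a y b) = μ a (μ a y b) b := by rw [h.M2₂, h.M2₁]
    rw [e2, e3, e4] at h2
    exact h2
  have e5 : dist (μ a (μ a y b) b) (μ a p b) ≤ ρ r := by
    refine (h.C1 _ _ _ _ _ _).trans (h.ρ_mono ?_)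
    rw [dist_self, dist_self, dist_comm]
    linarith
  have := dist_triangle4 p (μ a y b) (μ a (μ a y b) b) (μ a p b)
  linarith

/-- for a coarse median space and `n ∈ ℕ`, the multi-median
condition is equivalent to the thin `(n+1)`-cubes condition. -/
theorem stmt9 {X : Type*} [MetricSpace X] (μ : X → X → X → X)
    (ρ : ℝ → ℝ) (κ₄ : ℝ) (h : IsCoarseMedianSpace μ ρ κ₄) (n : ℕ) :
    -- Multi-median condition:
    (∃ ψ : ℝ → ℝ, Monotone ψ ∧ ∀ lam : ℝ, 0 < lam →
      ∀ (x : Fin (n + 1) → X) (q : X),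
        (⋂ (i) (j) (_ : i ≠ j), cmNbhd lam (cmInterval μ (x i) (x j))) ⊆
          ⋃ i, cmNbhd (ψ lam) (cmInterval μ (x i) q)) ↔
    -- Thin (n+1)-cubes condition:
    (∃ φ : ℝ → ℝ, Monotone φ ∧ ∀ (x : Fin (n + 1) → X) (p q : X) (ξ : ℝ),
      0 ≤ ξ → (∀ i j, i ≠ j → dist p (μ (x i) (x j) p) ≤ ξ) →
      ∃ i, dist p (μ (x i) p q) ≤ φ ξ) := by
  have hK : Monotone (fun r : ℝ => r + κ₄ + ρ r) := by
    intro r s hrs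
    have := h.ρ_mono hrs
    simp only
    linarith
  constructor
  · rintro ⟨ψ, hψ, H⟩
    refine ⟨fun ξ => ψ (ξ + 1) + κ₄ + ρ (ψ (ξ + 1)), ?_, ?_⟩
    · intro r s hrs
      exact hK (hψ (by linarith))
    · intro x p q ξ hξ hx
      have hp : p ∈ ⋂ (i) (j) (_ : i ≠ j), cmNbhd (ξ + 1) (cmInterval μ (x i) (x j)) := by
        simp only [Set.mem_iInter]
        intro i j hij
        refine ⟨_, ⟨p, rfl⟩, ?_⟩
        have := hx i j hij
        rw [h.M2₁] at this
        linarith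
      obtain ⟨i, hi⟩ := Set.mem_iUnion.1 (H (ξ + 1) (by linarith) x q hp)
      exact ⟨i, cm_near μ ρ κ₄ h _ _ _ _ hi⟩
  · rintro ⟨φ, hφ, H⟩
    refine ⟨fun r => φ (max 0 (r + κ₄ + ρ r)), ?_, ?_⟩
    · intro r s hrs
      exact hφ (max_le_max le_rfl (hK hrs))
    · intro r hr x q p hp
      simp only [Set.mem_iInter] at hp
      obtain ⟨i, hi⟩ := H x p q (max 0 (r + κ₄ + ρ r)) (le_max_left _ _) (by
        intro i j hij
        rw [h.M2₁]
        exact (cm_near μ ρ κ₄ h _ _ _ _ (hp i j hij)).trans (le_max_right _ _))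
      exact Set.mem_iUnion.2 ⟨i, _, ⟨p, rfl⟩, hi⟩
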